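/- arXiv:2409.19129 — 2 statements merged into one kernel-verified Lean document; each statement's English description precedes it below -/
import Mathlib

section
/- Let $(V_1,\ldots,V_K)$ be a partition of $[n]$ and let $f_{ij} \ge 0$ be symmetric edge weights. Let $L_n$ be the Laplacian on $[n]$, $L_{V_k}$ the Laplacian of the induced subgraph on $V_k$, and $T_K$ the Laplacian on $K$ super-nodes with weights $\tau_{st} = \sum_{i\in V_s}\sum_{j\in V_t} f_{ij}$ for $s \ne t$. Then $\det(L_n[1]) \ge \det(T_K[1]) \cdot \prod_{k=1}^K \det(L_{V_k}[1])$. -/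
open Matrix Finset

/-- The weighted-graph Laplacian on `Fin n` with edge weights `f`. -/
def lap {n : ℕ} (f : Fin n → Fin n → ℝ) : Matrix (Fin n) (Fin n) ℝ :=
  Matrix.of fun s t =>
    if s = t then ∑ u ∈ Finset.univ.erase s, f s u else -(f s t)

/-- The Laplacian of the induced weighted subgraph on `S`, with the row and column of
the chosen vertex `i` deleted (entries still refer to the Laplacian on `S`). -/
def lapMinor {n : ℕ} (f : Fin n → Fin n → ℝ) (S : Finset (Fin n)) (i : Fin n) :
    Matrix {x : Fin n // x ∈ S.erase i} {x : Fin n // x ∈ S.erase i} ℝ :=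
  Matrix.of fun a b =>
    if (a : Fin n) = (b : Fin n) then ∑ u ∈ S.erase (a : Fin n), f a u
    else -(f a b)


open scoped MatrixOrder in
theorem aux_det_add {N : Type*} [Fintype N] [DecidableEq N] {B S : Matrix N N ℝ}
    (hB : B.PosSemidef) (hS : S.PosSemidef) : B.det ≤ (B + S).det := by
  by_cases h : B.det = 0
  · rw [h]; exact (hB.add hS).det_nonneg
  obtain ⟨R, hR⟩ := CStarAlgebra.nonneg_iff_eq_star_mul_self.mp hB.nonneg
  have hRd : IsUnit R.det := by
    rw [isUnit_iff_ne_zero]; intro h0; apply h; rw [hR, det_mul, h0, mul_zero]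
  have hX : ((R⁻¹)ᴴ * S * R⁻¹).PosSemidef := hS.conjTranspose_mul_mul_same _
  set X := (R⁻¹)ᴴ * S * R⁻¹ with hXd
  have e : B + S = Rᴴ * (1 + X) * R := by
    have h1 : Rᴴ * (R⁻¹)ᴴ = 1 := by
      rw [← conjTranspose_mul, Matrix.nonsing_inv_mul _ hRd, conjTranspose_one]
    have : Rᴴ * X * R = S := by
      calc _ = (Rᴴ * (R⁻¹)ᴴ) * S * (R⁻¹ * R) := by simp only [hXd, Matrix.mul_assoc]
        _ = S := by rw [h1, Matrix.nonsing_inv_mul _ hRd, Matrix.one_mul, Matrix.mul_one]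
    rw [Matrix.mul_add, Matrix.add_mul, this, Matrix.mul_one, hR]; rfl
  have h1X : 1 ≤ (1 + X).det := by
    have hH := hX.1
    have e2 : (1 + X).det = ∏ i, (1 + hH.eigenvalues i) := by
      conv_lhs => rw [hH.spectral_theorem]
      set U := hH.eigenvectorUnitary
      have : (1 : Matrix N N ℝ) = Unitary.conjStarAlgAut ℝ _ U 1 := by simp
      conv_lhs => rw [this]
      rw [← map_add, Unitary.conjStarAlgAut_apply, det_mul, det_mul, mul_right_comm, ← det_mul]
      rw [Unitary.mul_star_self_of_mem U.2, det_one, one_mul, ← diagonal_one, diagonal_add, det_diagonal]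
      simp
    rw [e2]
    have := Finset.prod_le_prod (s := Finset.univ) (f := fun _ : N => (1:ℝ)) (g := fun i => 1 + hH.eigenvalues i) (fun _ _ => zero_le_one) (fun i _ => by have := hX.eigenvalues_nonneg i; linarith)
    simpa using this
  have hBd : B.det = R.det * R.det := by
    conv_lhs => rw [hR]
    rw [det_mul, star_eq_conjTranspose, det_conjTranspose]; simp
  rw [e, det_mul, det_mul, det_conjTranspose, hBd]
  simp only [star_trivial]
  nlinarith [mul_self_nonneg R.det]

theorem aux_blocks {M N : Type*} [Fintype M] [DecidableEq M] [Fintype N] [DecidableEq N]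
    {A : Matrix M M ℝ} {C : Matrix M N ℝ} {C' : Matrix N M ℝ} {D B : Matrix N N ℝ}
    (hG : (fromBlocks A C C' D).PosSemidef) (hB : B.PosSemidef) :
    A.det * B.det ≤ (fromBlocks A C C' (B + D)).det := by
  have hC : C' = Cᴴ := by
    have := (isHermitian_fromBlocks_iff.mp hG.1).2.1
    exact this.symm
  subst hC
  have hA : A.PosSemidef := hG.submatrix Sum.inl
  have hG2 : (fromBlocks A C Cᴴ (B + D)).PosSemidef := by
    have h0 : (fromBlocks (0 : Matrix M M ℝ) 0 0 B).PosSemidef := by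
      have := hB.conjTranspose_mul_mul_same (Matrix.fromCols (0 : Matrix N M ℝ) (1 : Matrix N N ℝ))
      convert this using 1
      rw [conjTranspose_fromCols_eq_fromRows_conjTranspose, fromRows_mul, fromRows_mul_fromCols]
      simp
    have := h0.add hG
    rw [fromBlocks_add] at this
    simpa using this
  by_cases h : A.det = 0
  · rw [h, zero_mul]; exact hG2.det_nonneg
  have hAp : A.PosDef := hA.posDef_iff_det_ne_zero.mpr h
  have : Invertible A := hAp.isUnit.invertible
  have hS := (PosDef.fromBlocks₁₁ C D hAp).mp hG
  rw [det_fromBlocks₁₁, invOf_eq_nonsing_inv, add_sub_assoc]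
  exact mul_le_mul_of_nonneg_left (aux_det_add hB hS) hA.det_nonneg

theorem aux_lap_apply {n : ℕ} (f : Fin n → Fin n → ℝ) (i j) :
    lap f i j = (if i = j then ∑ u, f i u else 0) - f i j := by
  unfold lap
  by_cases h : i = j
  · subst h; simp [Finset.sum_erase_eq_sub]
  · simp [h]

theorem aux_lap_quad {n : ℕ} (f : Fin n → Fin n → ℝ)
    (hsym : ∀ i j, f i j = f j i) (hnn : ∀ i j, 0 ≤ f i j) : (lap f).PosSemidef := by
  apply PosSemidef.of_dotProduct_mulVec_nonneg
  · ext i j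
    simp only [conjTranspose_apply, aux_lap_apply, star_trivial]
    rw [hsym j i]
    by_cases h : i = j
    · subst h; rfl
    · simp [h, Ne.symm h]
  · intro x
    have : star x ⬝ᵥ (lap f *ᵥ x) = (∑ i, ∑ j, f i j * (x i - x j)^2) / 2 := by
      simp only [dotProduct, mulVec, aux_lap_apply, star_trivial, Pi.star_apply, sub_mul, ite_mul, zero_mul, Finset.sum_sub_distrib, Finset.sum_ite_eq, Finset.mem_univ, if_true]
      have h1 : ∑ i, ∑ j, f i j * (x i - x j)^2 = ∑ i, ∑ j, f i j * x i ^2 + ∑ i, ∑ j, f i j * x j ^2 - 2 * ∑ i, ∑ j, x i * (f i j * x j) := by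
        simp only [Finset.mul_sum, ← Finset.sum_add_distrib, ← Finset.sum_sub_distrib]
        refine Finset.sum_congr rfl fun i _ => Finset.sum_congr rfl fun j _ => by ring
      have h2 : ∑ i, ∑ j, f i j * x j ^2 = ∑ i, ∑ j, f i j * x i ^2 := by
        rw [Finset.sum_comm]
        refine Finset.sum_congr rfl fun i _ => Finset.sum_congr rfl fun j _ => by rw [hsym]
      have h3 : ∑ i, x i * ((∑ u, f i u) * x i - ∑ j, f i j * x j) = ∑ i, ∑ j, f i j * x i ^2 - ∑ i, ∑ j, x i * (f i j * x j) := by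
        simp only [← Finset.sum_sub_distrib]
        refine Finset.sum_congr rfl fun i _ => ?_
        rw [mul_sub, Finset.mul_sum, Finset.sum_sub_distrib, ← Finset.sum_mul]; ring
      rw [h3, h1, h2]; ring
    rw [this]
    have : 0 ≤ ∑ i, ∑ j, f i j * (x i - x j)^2 := Finset.sum_nonneg fun i _ => Finset.sum_nonneg fun j _ => mul_nonneg (hnn i j) (sq_nonneg _)
    linarith

theorem aux_lap_mulVec_one {n : ℕ} (f : Fin n → Fin n → ℝ) : lap f *ᵥ 1 = 0 := by
  ext i
  simp [mulVec, dotProduct, aux_lap_apply, Finset.sum_sub_distrib]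

theorem aux_minor {n : ℕ} (f : Fin (n+1) → Fin (n+1) → ℝ)
    (hsym : ∀ i j, f i j = f j i) (a : Fin (n+1)) :
    (lap f + Matrix.single a a 1).det = ((lap f).submatrix Fin.succ Fin.succ).det := by
  have hL1 := aux_lap_mulVec_one f
  have hT : (lap f)ᵀ = lap f := by
    ext i j
    simp only [transpose_apply, aux_lap_apply]
    rw [hsym j i]
    by_cases h : i = j
    · subst h; rfl
    · simp [h, Ne.symm h]
  have hdet : (lap f).det = 0 :=
    Matrix.exists_mulVec_eq_zero_iff.mp ⟨1, one_ne_zero, hL1⟩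
  have hrow : ∀ i i' j, (lap f).adjugate i j = (lap f).adjugate i' j := by
    intro i i' j
    rw [adjugate_apply, adjugate_apply]
    have h0 : ((lap f).updateRow j (Pi.single i 1 - Pi.single i' 1)).det = 0 := by
      apply Matrix.exists_mulVec_eq_zero_iff.mp ⟨1, one_ne_zero, _⟩
      ext k
      by_cases hk : k = j
      · subst hk; simp [mulVec, dotProduct]
      · have := congrFun hL1 k
        simpa [mulVec, dotProduct, updateRow_apply, hk] using this
    have h1 := det_updateRow_add (lap f) j (Pi.single i 1 - Pi.single i' 1) (Pi.single i' 1)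
    rw [sub_add_cancel, h0, zero_add] at h1
    exact h1
  have hsy : ∀ i j, (lap f).adjugate i j = (lap f).adjugate j i := by
    intro i j
    conv_lhs => rw [← hT, ← adjugate_transpose]
    rfl
  have h00 : (lap f).adjugate a a = (lap f).adjugate 0 0 := by
    rw [hrow a 0 a, hsy, hrow a 0 0]
  have e : lap f + Matrix.single a a 1 = (lap f).updateRow a (lap f a + Pi.single a 1) := by
    ext i j
    by_cases h : i = a
    · subst h; simp [Matrix.single_apply, Pi.single_apply, eq_comm]
    · simp [updateRow_apply, h, Ne.symm h]
  rw [e, det_updateRow_add, updateRow_eq_self, hdet, zero_add, ← adjugate_apply, h00,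
    adjugate_fin_succ_eq_det_submatrix]
  simp

theorem aux_det_blockDiag {n K : ℕ} (V : Fin (K + 1) → Finset (Fin n)) (r : Fin (K + 1) → Fin n)
    (f h : Fin n → Fin n → ℝ) (c : Fin n → Fin (K + 1)) (hc : ∀ i k, i ∈ V k ↔ c i = k)
    (hh : ∀ i j, h i j = if c i = c j then f i j else 0) :
    (Matrix.of fun x y : (Σ k, {x : Fin n // x ∈ (V k).erase (r k)}) =>
      lap h x.2.1 y.2.1).det = ∏ k, (lapMinor f (V k) (r k)).det := by
  set B := (Matrix.of fun x y : (Σ k, {x : Fin n // x ∈ (V k).erase (r k)}) =>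
      lap h x.2.1 y.2.1) with hB
  have hcx : ∀ x : (Σ k, {x : Fin n // x ∈ (V k).erase (r k)}), c x.2.1 = x.1 := fun x =>
    (hc _ _).mp (Finset.mem_of_mem_erase x.2.2)
  have hbt : B.BlockTriangular Sigma.fst := by
    intro x y hxy
    have hne : c x.2.1 ≠ c y.2.1 := by rw [hcx, hcx]; exact ne_of_gt hxy
    have hne' : x.2.1 ≠ y.2.1 := fun e => hne (by rw [e])
    simp [hB, aux_lap_apply, hh, hne, hne']
  rw [hbt.det_fintype]
  refine Finset.prod_congr rfl fun k _ => ?_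
  let e : {x : Fin n // x ∈ (V k).erase (r k)} ≃
      {a : (Σ k, {x : Fin n // x ∈ (V k).erase (r k)}) // a.1 = k} :=
    { toFun := fun x => ⟨⟨k, x⟩, rfl⟩
      invFun := fun a => ⟨a.1.2.1, by
        obtain ⟨⟨k', x⟩, rfl⟩ := a
        exact x.2⟩
      left_inv := fun x => rfl
      right_inv := by rintro ⟨⟨k', x⟩, rfl⟩; rfl }
  rw [← det_submatrix_equiv_self e]
  congr 1
  ext a b
  have ha : c a.1 = k := (hc _ _).mp (Finset.mem_of_mem_erase a.2)
  have hb : c b.1 = k := (hc _ _).mp (Finset.mem_of_mem_erase b.2)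
  have hs : ∑ u, h a.1 u = ∑ u ∈ V k, f a.1 u := by
    have : V k = Finset.univ.filter (fun u => c a.1 = c u) := by
      ext u; simp [hc, ha, eq_comm]
    have h2 : ∑ u ∈ V k, f a.1 u = ∑ u ∈ Finset.univ.filter (fun u => c a.1 = c u), f a.1 u :=
      Finset.sum_congr this fun _ _ => rfl
    rw [h2, Finset.sum_filter]
    exact Finset.sum_congr rfl fun u _ => hh _ _
  change lap h a.1 b.1 = _
  rw [aux_lap_apply, hs, hh, ha, hb]
  unfold lapMinor
  by_cases hab : a.1 = b.1
  · simp only [hab, if_true, of_apply]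
    rw [Finset.sum_erase_eq_sub (Finset.mem_of_mem_erase b.2)]
  · simp only [hab, if_true, if_false, of_apply, zero_sub]

theorem aux_conj_apply {I J : Type*} [Fintype I] (A : Matrix I I ℝ) (Q : Matrix I J ℝ) (a b : J) :
    (Qᴴ * A * Q) a b = ∑ i, Q i a * ∑ j, A i j * Q j b := by
  rw [Matrix.mul_assoc]
  simp [Matrix.mul_apply]

theorem aux_sum_ite {I : Type*} [Fintype I] [DecidableEq I] (i : I) (p : I → Prop)
    [DecidablePred p] (X : ℝ) :
    ∑ a, (if p a then if i = a then X else 0 else 0) = if p i then X else 0 := by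
  rw [Finset.sum_eq_single i]
  · simp
  · intro b _ hb; simp [Ne.symm hb]
  · simp

/-- for a partition `(V k)` of the vertex set with symmetric nonnegative
weights `f`, letting `T` be the Laplacian on the super-nodes with weights
`τ s t = ∑_{i ∈ V s} ∑_{j ∈ V t} f i j`, one has
`det (Lₙ[1]) ≥ det (T[1]) * ∏ k det (L_{V k}[rₖ])`. -/
theorem det_minor_ge_supernode_mul_blocks {n K : ℕ}
    (f : Fin (n + 1) → Fin (n + 1) → ℝ)
    (hsym : ∀ i j, f i j = f j i) (hnn : ∀ i j, 0 ≤ f i j)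
    (V : Fin (K + 1) → Finset (Fin (n + 1)))
    (hdisj : ∀ k l, k ≠ l → Disjoint (V k) (V l))
    (hcover : ∀ i, ∃ k, i ∈ V k)
    (r : Fin (K + 1) → Fin (n + 1)) (hr : ∀ k, r k ∈ V k) :
    (((lap fun s t : Fin (K + 1) => ∑ i ∈ V s, ∑ j ∈ V t, f i j).submatrix
            Fin.succ Fin.succ).det)
        * ∏ k, (lapMinor f (V k) (r k)).det
      ≤ ((lap f).submatrix Fin.succ Fin.succ).det := by
  classical
  choose c hc0 using hcover
  have hc : ∀ i k, i ∈ V k ↔ c i = k := by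
    intro i k
    constructor
    · intro h
      by_contra hne
      exact Finset.disjoint_left.mp (hdisj _ _ hne) (hc0 i) h
    · rintro rfl; exact hc0 i
  have hcr : ∀ k, c (r k) = k := fun k => (hc _ _).mp (hr k)
  set h : Fin (n+1) → Fin (n+1) → ℝ := fun i j => if c i = c j then f i j else 0 with hh
  set g : Fin (n+1) → Fin (n+1) → ℝ := fun i j => if c i = c j then 0 else f i j with hg
  have hcx : ∀ x : (Σ k, {x : Fin (n+1) // x ∈ (V k).erase (r k)}), c x.2.1 = x.1 := fun x =>
    (hc _ _).mp (Finset.mem_of_mem_erase x.2.2)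
  rw [← aux_det_blockDiag V r f h c hc (fun i j => rfl)]
  set B := (Matrix.of fun x y : (Σ k, {x : Fin (n+1) // x ∈ (V k).erase (r k)}) =>
      lap h x.2.1 y.2.1) with hB
  have hLsum : lap f = lap h + lap g := by
    ext i j
    have hfgh : ∀ i j, f i j = h i j + g i j := by
      intro i j; simp only [hh, hg]; split_ifs <;> simp
    simp only [Matrix.add_apply, aux_lap_apply, hfgh, Finset.sum_add_distrib]
    split_ifs <;> ring
  have hhP : (lap h).PosSemidef := by
    apply aux_lap_quad
    · intro i j; simp only [hh, eq_comm (a := c i), hsym i j]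
    · intro i j; simp only [hh]; split_ifs; exacts [hnn _ _, le_rfl]
  have hgP : (lap g).PosSemidef := by
    apply aux_lap_quad
    · intro i j; simp only [hg, eq_comm (a := c i), hsym i j]
    · intro i j; simp only [hg]; split_ifs; exacts [le_rfl, hnn _ _]
  have hBP : B.PosSemidef := hhP.submatrix
    (fun x : (Σ k, {x : Fin (n+1) // x ∈ (V k).erase (r k)}) => x.2.1)
  -- the change of coordinates
  set Q : Matrix (Fin (n+1)) (Fin (K+1) ⊕ (Σ k, {x : Fin (n+1) // x ∈ (V k).erase (r k)})) ℝ :=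
    Matrix.of fun i => Sum.elim (fun k => if c i = k then 1 else 0)
      (fun x => if i = x.2.1 then 1 else 0) with hQ
  have hQl : ∀ i k, Q i (Sum.inl k) = if c i = k then 1 else 0 := fun _ _ => rfl
  have hQr : ∀ i x, Q i (Sum.inr x) = if i = x.2.1 then 1 else 0 := fun _ _ => rfl
  have hbij : Function.Bijective (Sum.elim r
      (fun x : (Σ k, {x : Fin (n+1) // x ∈ (V k).erase (r k)}) => x.2.1)) := by
    constructor
    · rintro (k | x) (l | y) hxy
      · simp only [Sum.elim_inl] at hxy
        rw [← hcr k, hxy, hcr]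
      · simp only [Sum.elim_inl, Sum.elim_inr] at hxy
        have h1 := hcx y
        rw [← hxy, hcr] at h1
        exact absurd (by rw [← hxy, h1]) (Finset.ne_of_mem_erase y.2.2)
      · simp only [Sum.elim_inl, Sum.elim_inr] at hxy
        have h1 := hcx x
        rw [hxy, hcr] at h1
        exact absurd (by rw [hxy, h1]) (Finset.ne_of_mem_erase x.2.2)
      · simp only [Sum.elim_inr] at hxy
        have h1 := hcx x
        rw [hxy, hcx] at h1
        obtain ⟨k, x⟩ := x
        obtain ⟨l, y⟩ := y
        simp only at h1 hxy
        subst h1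
        rw [Subtype.ext hxy]
    · intro i
      by_cases hi : i = r (c i)
      · exact ⟨Sum.inl (c i), hi.symm⟩
      · exact ⟨Sum.inr ⟨c i, i, Finset.mem_erase.mpr ⟨hi, hc0 i⟩⟩, rfl⟩
  set e := Equiv.ofBijective _ hbij with he
  have hel : ∀ k, e (Sum.inl k) = r k := fun _ => rfl
  have her : ∀ x, e (Sum.inr x) = x.2.1 := fun _ => rfl
  have hQdet : (Q.submatrix e id).det = 1 := by
    have : Q.submatrix e id = fromBlocks 1 0
        (Matrix.of fun x k => Q (e (Sum.inr x)) (Sum.inl k)) 1 := by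
      ext (k | x) (l | y)
      · simp [hQl, hel, hcr, Matrix.one_apply]
      · have hne : e (Sum.inl k) ≠ e (Sum.inr y) := fun hE => by simpa using e.injective hE
        rw [her] at hne
        simp [hQr, hne]
      · simp
      · have : e (Sum.inr x) = e (Sum.inr y) ↔ x = y := by simp
        rw [her y] at this
        simp [hQr, this, Matrix.one_apply]
    rw [this, det_fromBlocks_zero₁₂]; simp
  have hconj : ∀ M : Matrix (Fin (n+1)) (Fin (n+1)) ℝ, (Qᴴ * M * Q).det = M.det := by
    intro M
    have : Qᴴ * M * Q = (Q.submatrix e id)ᴴ * (M.submatrix e e) * (Q.submatrix e id) := by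
      rw [conjTranspose_submatrix, submatrix_mul_equiv, submatrix_mul_equiv, submatrix_id_id]
    rw [this, det_mul, det_mul, det_conjTranspose, hQdet, det_submatrix_equiv_self]
    simp
  set G := Qᴴ * (lap g + Matrix.single (r 0) (r 0) 1) * Q with hG
  have hGP : G.PosSemidef := by
    apply PosSemidef.conjTranspose_mul_mul_same
    apply hgP.add
    have : (Matrix.single (r 0) (r 0) (1:ℝ)) = Matrix.diagonal (Pi.single (r 0) 1) := by
      rw [Matrix.diagonal_single]
    rw [this]
    apply PosSemidef.diagonal
    exact Pi.single_nonneg.mpr zero_le_one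
  have hin : Qᴴ * lap h * Q = fromBlocks 0 0 0 B := by
    have hz : ∀ i k, ∑ j, lap h i j * Q j (Sum.inl k) = 0 := by
      intro i k
      have h1 : ∀ j, h i j * Q j (Sum.inl k) = h i j * Q i (Sum.inl k) := by
        intro j
        simp only [hh, hQl]
        by_cases hij : c i = c j
        · rw [hij]
        · simp [hij]
      simp only [aux_lap_apply, sub_mul, Finset.sum_sub_distrib, h1]
      simp [← Finset.sum_mul]
    have hsy : (Qᴴ * lap h * Q)ᴴ = Qᴴ * lap h * Q :=
      (hhP.conjTranspose_mul_mul_same Q).1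
    have hcol : ∀ a k, (Qᴴ * lap h * Q) a (Sum.inl k) = 0 := by
      intro a k
      rw [aux_conj_apply]; simp [hz]
    ext a (l | y)
    · rw [hcol]; rcases a with k | x <;> rfl
    · rcases a with k | x
      · rw [← hsy, conjTranspose_apply, hcol]; simp
      · rw [aux_conj_apply]; simp [hQr, hB]
  have h11 : G.toBlocks₁₁ = lap (fun s t : Fin (K + 1) => ∑ i ∈ V s, ∑ j ∈ V t, f i j)
      + Matrix.single 0 0 1 := by
    have hV : ∀ k, V k = Finset.univ.filter (fun u => c u = k) := by
      intro k; ext u; simp [hc]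
    set τ : Fin (K+1) → Fin (K+1) → ℝ := fun s t => ∑ i ∈ V s, ∑ j ∈ V t, g i j with hτ
    have hlap : lap (fun s t : Fin (K + 1) => ∑ i ∈ V s, ∑ j ∈ V t, f i j) = lap τ := by
      have hst : ∀ s t, s ≠ t → ∑ i ∈ V s, ∑ j ∈ V t, f i j = τ s t := by
        intro s t hne
        refine Finset.sum_congr rfl fun i hi => Finset.sum_congr rfl fun j hj => ?_
        rw [hc] at hi hj
        simp [hg, hi, hj, hne]
      ext s t
      unfold lap
      simp only [of_apply]
      split_ifs with hE
      · exact Finset.sum_congr rfl fun u hu => hst _ _ (Finset.ne_of_mem_erase hu).symm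
      · rw [hst _ _ hE]
    rw [hlap]
    ext s t
    have hrow : ∑ t, τ s t = ∑ i ∈ V s, ∑ u, g i u := by
      simp only [hτ]
      rw [Finset.sum_comm]
      refine Finset.sum_congr rfl fun i _ => ?_
      simp only [hV]
      exact Finset.sum_fiberwise _ _ _
    have hsing : ∀ i, ∑ j, (Matrix.single (r 0) (r 0) (1:ℝ)) i j * Q j (Sum.inl t)
        = if r 0 = i ∧ 0 = t then 1 else 0 := by
      intro i
      by_cases hi : r 0 = i
      · subst hi; simp [Matrix.single_apply, hQl, hcr, aux_sum_ite]
      · simp [Matrix.single_apply, hi]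
    change G (Sum.inl s) (Sum.inl t) = _
    rw [hG, Matrix.mul_add, Matrix.add_mul, Matrix.add_apply, Matrix.add_apply,
      aux_conj_apply, aux_conj_apply]
    congr 1
    · rw [aux_lap_apply, hrow]
      simp only [hτ, hV, Finset.sum_filter, hQl, aux_lap_apply]
      simp only [mul_ite, mul_one, mul_zero, ite_mul, one_mul, zero_mul]
      by_cases hst : s = t
      · subst hst
        rw [if_pos rfl, ← Finset.sum_sub_distrib]
        refine Finset.sum_congr rfl fun i _ => ?_
        by_cases hi : c i = s
        · simp only [hi, if_true]
          rw [← Finset.sum_filter, Finset.sum_sub_distrib, Finset.sum_filter, Finset.sum_filter]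
          simp [hi, aux_sum_ite]
        · simp [hi]
      · rw [if_neg hst, zero_sub, ← Finset.sum_neg_distrib]
        refine Finset.sum_congr rfl fun i _ => ?_
        by_cases hi : c i = s
        · simp only [hi, if_true]
          rw [← Finset.sum_filter, Finset.sum_sub_distrib, Finset.sum_filter, Finset.sum_filter]
          simp [hi, hst, aux_sum_ite]
        · simp [hi]
    · rw [Finset.sum_congr rfl fun i _ => by rw [hsing i]]
      simp only [hQl]
      by_cases h0 : 0 = t
      · subst h0
        simp [Matrix.single_apply, hcr, aux_sum_ite]
      · simp [h0]
  have hτsym : ∀ s t : Fin (K+1), ∑ i ∈ V s, ∑ j ∈ V t, f i j = ∑ i ∈ V t, ∑ j ∈ V s, f i j := by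
    intro s t
    rw [Finset.sum_comm]
    exact Finset.sum_congr rfl fun i _ => Finset.sum_congr rfl fun j _ => hsym _ _
  rw [← aux_minor _ hτsym 0, ← aux_minor f hsym (r 0), ← h11, ← hconj, hLsum, add_assoc,
    Matrix.mul_add, Matrix.add_mul, hin, ← hG]
  have key := aux_blocks (A := G.toBlocks₁₁) (C := G.toBlocks₁₂) (C' := G.toBlocks₂₁)
    (D := G.toBlocks₂₂) (B := B) (by rw [fromBlocks_toBlocks]; exact hGP) hBP
  have hfin : fromBlocks 0 0 0 B + G
      = fromBlocks G.toBlocks₁₁ G.toBlocks₁₂ G.toBlocks₂₁ (B + G.toBlocks₂₂) := by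
    conv_lhs => rw [← fromBlocks_toBlocks G, fromBlocks_add]
    simp
  rw [hfin]
  exact key
end

section
/- Suppose there exists $\varepsilon > 0$ such that the edge weights satisfy $f_{st} \le \varepsilon$ whenever $s, t$ lie in different blocks of a partition $(V_1,\ldots,V_K)$ of $[n]$ and $f_{s't'} \ge \varepsilon$ whenever $s', t'$ lie in the same block. Then $\frac{\det(L_n + n^{-1}J)}{\prod_{i=1}^K \det(L_{V_i} + n_i^{-1}J)} \le (n\varepsilon)^{K-1} \prod_{i=1}^K \prod_{j=2}^{n_i} \Big(1 + \frac{(n - n_i)\varepsilon}{\lambda_{ij}}\Big)$, where $\lambda_{ij}$ is the $j$-th smallest eigenvalue of $L_{V_i}$ and $n_i = |V_i|$. -/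
open Matrix Finset

/-- The Laplacian of the induced weighted subgraph on a finset `S`. -/
def lapOn {n : ℕ} (f : Fin n → Fin n → ℝ) (S : Finset (Fin n)) :
    Matrix {x : Fin n // x ∈ S} {x : Fin n // x ∈ S} ℝ :=
  Matrix.of fun a b =>
    if (a : Fin n) = (b : Fin n) then ∑ u ∈ S.erase (a : Fin n), f a u
    else -(f a b)

/-- The all-ones matrix. -/
def Jmat (ι : Type*) : Matrix ι ι ℝ := Matrix.of fun _ _ => 1

theorem aux_det_one_add {ι : Type*} [Fintype ι] [DecidableEq ι] (Q : Matrix ι ι ℝ)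
    (hQ : Q.PosSemidef) : 1 ≤ (1 + Q).det := by
  have h := Matrix.eval_charpoly Q (-1)
  rw [hQ.1.charpoly_eq, Polynomial.eval_prod] at h
  have h2 : (Matrix.scalar ι (-1 : ℝ) - Q) = -(1 + Q) := by
    ext i j; by_cases h : i = j
    · subst h; simp; ring
    · simp [h]
  rw [h2, Matrix.det_neg] at h
  have h3 : (1 + Q).det = ∏ i, (1 + hQ.1.eigenvalues i) := by
    have h4 : ∀ i, Polynomial.eval (-1 : ℝ) (Polynomial.X - Polynomial.C (hQ.1.eigenvalues i))
        = (-1) * (1 + hQ.1.eigenvalues i) := by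
      intro i; simp; ring
    have h5 : (∏ i, (-1 : ℝ) * (1 + hQ.1.eigenvalues i)) = (-1) ^ Fintype.card ι * (1 + Q).det := by
      rw [← h]; exact Finset.prod_congr rfl fun i _ => (h4 i).symm
    rw [Finset.prod_mul_distrib, Finset.prod_const, Finset.card_univ] at h5
    exact (mul_left_cancel₀ (pow_ne_zero _ (by norm_num)) h5).symm
  rw [h3]
  refine Finset.one_le_prod fun i _ => ?_
  have := hQ.eigenvalues_nonneg i
  linarith

theorem aux_det_mono {ι : Type*} [Fintype ι] [DecidableEq ι] (A P : Matrix ι ι ℝ)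
    (hA : A.PosSemidef) (hP : P.PosSemidef) : A.det ≤ (A + P).det := by
  by_cases h0 : A.det = 0
  · rw [h0]; exact (hA.add hP).det_nonneg
  have hAd : A.PosDef := hA.posDef_iff_det_ne_zero.2 h0
  obtain ⟨C, rfl⟩ : ∃ C : Matrix ι ι ℝ, P = Cᴴ * C := by
    open scoped MatrixOrder Matrix.Norms.L2Operator in
    exact CStarAlgebra.nonneg_iff_eq_star_mul_self.1 hP.nonneg
  have hu : IsUnit A.det := isUnit_iff_ne_zero.2 h0
  have e : A + Cᴴ * C = A * (1 + A⁻¹ * Cᴴ * C) := by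
    rw [mul_add, mul_one, mul_assoc, Matrix.mul_nonsing_inv_cancel_left _ _ hu]
  rw [e, Matrix.det_mul, Matrix.det_one_add_mul_comm, ← mul_assoc]
  have := aux_det_one_add (C * A⁻¹ * Cᴴ) (hAd.inv.posSemidef.mul_mul_conjTranspose_same C)
  nlinarith [hAd.det_pos]

theorem aux_det_J {ι : Type*} [Fintype ι] [DecidableEq ι] (A : Matrix ι ι ℝ) (a c : ℝ)
    (h : ∀ i, ∑ j, A i j = a) :
    (A + c • Jmat ι).det * a = A.det * (a + c * Fintype.card ι) := by
  by_cases ha : a = 0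
  · subst ha
    by_cases hE : Nonempty ι
    · have : A.det = 0 := by
        apply Matrix.exists_mulVec_eq_zero_iff.1
        refine ⟨fun _ => 1, ?_, ?_⟩
        · intro h; have := congrFun h hE.some; simp at this
        · ext i; simp [Matrix.mulVec, dotProduct, h]
      simp [this]
    · have := not_nonempty_iff.1 hE
      simp
  have e : A + c • Jmat ι = A * (1 + (c / a) • Jmat ι) := by
    have hJ : A * Jmat ι = a • Jmat ι := by
      ext i j
      simp [Matrix.mul_apply, Jmat, h]
    rw [mul_add, mul_one, Matrix.mul_smul, hJ, smul_smul, div_mul_cancel₀ _ ha]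
  have e2 : (c / a) • Jmat ι = Matrix.replicateCol Unit (fun _ : ι => c / a) *
      Matrix.replicateRow Unit (fun _ : ι => (1 : ℝ)) := by
    ext i j; simp [Jmat, Matrix.mul_apply]
  rw [e, Matrix.det_mul, e2, Matrix.det_one_add_replicateCol_mul_replicateRow]
  simp [dotProduct]
  field_simp

theorem aux_lap_psd {n : ℕ} (w : Fin n → Fin n → ℝ) (hs : ∀ s t, w s t = w t s)
    (h0 : ∀ s t, 0 ≤ w s t) : (lap w).PosSemidef := by
  apply Matrix.PosSemidef.of_dotProduct_mulVec_nonneg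
  · ext i j
    by_cases h : i = j
    · subst h; simp
    · simp [lap, h, Ne.symm h, hs i j]
  · intro x
    have row : ∀ s, (lap w *ᵥ x) s = ∑ t, w s t * (x s - x t) := by
      intro s
      have : ∀ t, lap w s t * x t = (if s = t then (∑ u, w s u) * x t else 0) - w s t * x t := by
        intro t
        by_cases h : s = t
        · subst h
          have := Finset.add_sum_erase Finset.univ (w s) (Finset.mem_univ s)
          simp only [lap, Matrix.of_apply, if_true]; rw [← this]; ring
        · simp [lap, h]
      simp only [Matrix.mulVec, dotProduct, this, Finset.sum_sub_distrib, mul_sub]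
      simp [Finset.sum_mul]
    have e : star x ⬝ᵥ lap w *ᵥ x = ∑ s, ∑ t, w s t * (x s * (x s - x t)) := by
      simp only [dotProduct, row, Finset.mul_sum]
      refine Finset.sum_congr rfl fun s _ => Finset.sum_congr rfl fun t _ => ?_
      simp; ring
    have e2 : ∑ s, ∑ t, w s t * (x s * (x s - x t)) = ∑ s, ∑ t, w s t * (x t * (x t - x s)) := by
      rw [Finset.sum_comm]
      refine Finset.sum_congr rfl fun s _ => Finset.sum_congr rfl fun t _ => ?_
      rw [hs]
    have e3 : 0 ≤ ∑ s, ∑ t, w s t * (x s * (x s - x t)) +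
        ∑ s, ∑ t, w s t * (x t * (x t - x s)) := by
      rw [← Finset.sum_add_distrib]
      refine Finset.sum_nonneg fun s _ => ?_
      rw [← Finset.sum_add_distrib]
      refine Finset.sum_nonneg fun t _ => ?_
      have := mul_nonneg (h0 s t) (sq_nonneg (x s - x t))
      nlinarith
    rw [e]; linarith

theorem aux_J_psd {n : ℕ} : (Jmat (Fin n)).PosSemidef := by
  have := Matrix.posSemidef_vecMulVec_self_star (fun _ : Fin n => (1 : ℝ))
  convert this using 1
  ext i j; simp [Jmat, Matrix.vecMulVec]

theorem aux_block {ι : Type*} [Fintype ι] [DecidableEq ι] (L : Matrix ι ι ℝ) {m : ℕ}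
    (hm : Fintype.card ι = m) (hm0 : 0 < m)
    (hL : ∀ i, ∑ j, L i j = 0) (lam : Fin m → ℝ)
    (hz : ∀ j : Fin m, (j : ℕ) = 0 → lam j = 0)
    (hr : L.charpoly.roots = Multiset.map lam Finset.univ.val) (b c : ℝ) :
    (L + b • (1 : Matrix ι ι ℝ) + c • Jmat ι).det = (b + c * m) *
      ∏ j ∈ Finset.univ.filter (fun j : Fin m => (j : ℕ) ≠ 0), (lam j + b) := by
  have hch : L.charpoly = ∏ j, (Polynomial.X - Polynomial.C (lam j)) := by
    rw [← Polynomial.prod_multiset_X_sub_C_of_monic_of_roots_card_eq L.charpoly_monic, hr]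
    · simp [Finset.prod, Function.comp_def]
    · rw [hr, Matrix.charpoly_natDegree_eq_dim, hm]; simp
  have hdet : ∀ b : ℝ, (L + b • (1 : Matrix ι ι ℝ)).det = ∏ j, (lam j + b) := by
    intro b
    have h := Matrix.eval_charpoly L (-b)
    rw [hch, Polynomial.eval_prod] at h
    have h2 : (Matrix.scalar ι (-b) - L) = -(L + b • (1 : Matrix ι ι ℝ)) := by
      ext i j; by_cases h : i = j
      · subst h; simp; ring
      · simp [h]
    rw [h2, Matrix.det_neg, hm] at h
    have h5 : (∏ j, (-1 : ℝ) * (lam j + b)) = (-1) ^ m * (L + b • (1 : Matrix ι ι ℝ)).det := by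
      rw [← h]; refine Finset.prod_congr rfl fun i _ => ?_
      simp; ring
    rw [Finset.prod_mul_distrib, Finset.prod_const, Finset.card_univ, Fintype.card_fin] at h5
    exact (mul_left_cancel₀ (pow_ne_zero _ (by norm_num)) h5).symm
  have hsplit : ∀ b : ℝ, ∏ j, (lam j + b) =
      b * ∏ j ∈ Finset.univ.filter (fun j : Fin m => (j : ℕ) ≠ 0), (lam j + b) := by
    intro b
    have hf : Finset.univ.filter (fun j : Fin m => (j : ℕ) ≠ 0) = Finset.univ.erase ⟨0, hm0⟩ := by
      ext j; simp [Fin.ext_iff]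
    rw [hf, ← Finset.mul_prod_erase Finset.univ _ (Finset.mem_univ (⟨0, hm0⟩ : Fin m)),
      hz _ rfl, zero_add]
  have hne : ∀ b : ℝ, b ≠ 0 → (L + b • (1 : Matrix ι ι ℝ) + c • Jmat ι).det = (b + c * m) *
      ∏ j ∈ Finset.univ.filter (fun j : Fin m => (j : ℕ) ≠ 0), (lam j + b) := by
    intro b hb
    have := aux_det_J (L + b • (1 : Matrix ι ι ℝ)) b c (by
      intro i; simp [Finset.sum_add_distrib, hL, Matrix.one_apply])
    rw [hdet, hsplit, hm] at this
    apply mul_right_cancel₀ hb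
    rw [this]; ring
  have hcont := Continuous.ext_on (dense_compl_singleton (0 : ℝ))
    (f := fun b : ℝ => (L + b • (1 : Matrix ι ι ℝ) + c • Jmat ι).det)
    (g := fun b : ℝ => (b + c * m) *
      ∏ j ∈ Finset.univ.filter (fun j : Fin m => (j : ℕ) ≠ 0), (lam j + b))
    (by fun_prop) (by fun_prop) (fun b hb => hne b hb)
  exact congrFun hcont b

theorem aux_lap_row {n : ℕ} (w : Fin n → Fin n → ℝ) (s : Fin n) : ∑ t, lap w s t = 0 := by
  rw [← Finset.add_sum_erase Finset.univ _ (Finset.mem_univ s)]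
  have : ∀ t ∈ Finset.univ.erase s, lap w s t = - w s t := by
    intro t ht
    simp [lap, (Finset.ne_of_mem_erase ht).symm]
  rw [Finset.sum_congr rfl this]
  simp [lap]

theorem aux_lapOn_row {n : ℕ} (w : Fin n → Fin n → ℝ) (S : Finset (Fin n))
    (s : {x : Fin n // x ∈ S}) : ∑ t, lapOn w S s t = 0 := by
  have h0 : ∑ t, lapOn w S s t = ∑ t ∈ S, (if (s : Fin n) = t then
      ∑ u ∈ S.erase (s : Fin n), w s u else -(w s t)) :=
    Finset.sum_coe_sort S (fun t => if (s : Fin n) = t then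
      ∑ u ∈ S.erase (s : Fin n), w s u else -(w s t))
  rw [h0, ← Finset.add_sum_erase S _ s.2]
  have : ∀ t ∈ S.erase (s : Fin n), (if (s : Fin n) = t then
      ∑ u ∈ S.erase (s : Fin n), w s u else -(w s t)) = - w s t := by
    intro t ht
    simp [(Finset.ne_of_mem_erase ht).symm]
  rw [Finset.sum_congr rfl this]
  simp

theorem aux_full {n K : ℕ} (ε : ℝ) (f : Fin n → Fin n → ℝ)
    (V : Fin K → Finset (Fin n)) (kf : Fin n → Fin K) (hkf : ∀ s k, s ∈ V k ↔ kf s = k) :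
    (lap (fun s t => if kf s = kf t then f s t else ε) + ε • Jmat (Fin n)).det =
      ∏ k, (lapOn f (V k) + (((n : ℝ) - (V k).card) * ε) • (1 : Matrix _ _ ℝ) +
        ε • Jmat _).det := by
  have hbt : (lap (fun s t => if kf s = kf t then f s t else ε) +
      ε • Jmat (Fin n)).BlockTriangular kf := by
    intro a b h
    have hab : a ≠ b := by
      rintro rfl; exact lt_irrefl _ h
    simp [lap, Jmat, hab, h.ne']
  rw [hbt.det_fintype]
  refine Finset.prod_congr rfl fun k _ => ?_
  let e : {x : Fin n // x ∈ V k} ≃ {x : Fin n // kf x = k} :=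
    Equiv.subtypeEquivRight fun s => hkf s k
  rw [← Matrix.det_submatrix_equiv_self e]
  congr 1
  ext ⟨a, ha⟩ ⟨b, hb⟩
  have hk := (hkf a k).1 ha
  have hl := (hkf b k).1 hb
  by_cases hab : a = b
  · subst hab
    have h1 : ∑ u ∈ Finset.univ.erase a, (if kf a = kf u then f a u else ε) =
        ∑ u ∈ (V k).erase a, f a u + ((n : ℝ) - (V k).card) * ε := by
      have h2 : ∀ u, kf a = kf u ↔ u ∈ V k := by
        intro u; rw [hkf, hk]; exact eq_comm
      simp only [h2]
      rw [Finset.sum_ite, Finset.sum_const, nsmul_eq_mul]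
      have h3 : (Finset.univ.erase a).filter (fun u => u ∈ V k) = (V k).erase a := by
        ext u; simp [and_comm]
      have h4 : (Finset.univ.erase a).filter (fun u => u ∉ V k) = (V k)ᶜ := by
        ext u; simp only [Finset.mem_filter, Finset.mem_erase, Finset.mem_univ, Finset.mem_compl]
        constructor
        · exact fun h => h.2
        · exact fun h => ⟨⟨fun h5 => h (h5 ▸ ha), trivial⟩, h⟩
      rw [h3, h4, Finset.card_compl, Nat.cast_sub (Finset.card_le_univ _)]
      simp
    simp [e, Matrix.toSquareBlock_def, lap, lapOn, Jmat, h1]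
    have h5 : ∀ (S : Finset (Fin n)) (F : Fin n → ℝ), a ∈ S →
        ∑ u ∈ S.erase a, F u = ∑ u ∈ S, F u - F a := fun S F h =>
      Finset.sum_erase_eq_sub h
    rw [h5 _ _ (Finset.mem_univ a), h5 _ _ ha] at h1
    simp only [if_true] at h1
    exact h1
  · simp [e, Matrix.toSquareBlock_def, lap, lapOn, Jmat, hab, hk, hl, Matrix.one_apply]

/-- if cross-block weights are `≤ ε` and within-block weights are `≥ ε`
for a partition `(V i)` of `[n]` (each block inducing a connected graph, so its
Laplacian eigenvalues `lam i j` are positive for `j ≥ 2`), then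
`det (Lₙ + n⁻¹J) / ∏ i det (L_{V i} + n_i⁻¹J)
  ≤ (n ε)^(K-1) ∏ i ∏_{j ≥ 2} (1 + (n - n_i) ε / lam i j)`. -/
theorem ratio_det_full_le {n K : ℕ} (hn : 0 < n) (hK : 0 < K)
    (ε : ℝ) (hε : 0 < ε) (f : Fin n → Fin n → ℝ)
    (hsym : ∀ s t, f s t = f t s) (hnn : ∀ s t, 0 ≤ f s t)
    (V : Fin K → Finset (Fin n))
    (hdisj : ∀ k l, k ≠ l → Disjoint (V k) (V l))
    (hcover : ∀ i, ∃ k, i ∈ V k)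
    (hne : ∀ k, (V k).Nonempty)
    (hcross : ∀ (s t : Fin n) (k l : Fin K), k ≠ l → s ∈ V k → t ∈ V l → f s t ≤ ε)
    (hwithin : ∀ (s t : Fin n) (k : Fin K), s ∈ V k → t ∈ V k → s ≠ t → ε ≤ f s t)
    (lam : (k : Fin K) → Fin (V k).card → ℝ)
    (hmono : ∀ k, Monotone (lam k))
    (hzero : ∀ (k : Fin K) (j : Fin (V k).card), (j : ℕ) = 0 → lam k j = 0)
    (hpos : ∀ (k : Fin K) (j : Fin (V k).card), (j : ℕ) ≠ 0 → 0 < lam k j)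
    (hroots : ∀ k,
      ((lapOn f (V k)).charpoly).roots = Multiset.map (lam k) Finset.univ.val) :
    (lap f + ((n : ℝ))⁻¹ • Jmat (Fin n)).det /
        (∏ k, (lapOn f (V k) + (((V k).card : ℝ))⁻¹ • Jmat _).det)
      ≤ ((n : ℝ) * ε) ^ (K - 1) *
          ∏ k, ∏ j ∈ Finset.univ.filter (fun j : Fin (V k).card => (j : ℕ) ≠ 0),
            (1 + ((n : ℝ) - ((V k).card : ℝ)) * ε / lam k j) := by
  choose kf hkf0 using hcover
  have hkf : ∀ s k, s ∈ V k ↔ kf s = k := by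
    intro s k
    constructor
    · intro h
      by_contra hne
      exact Finset.disjoint_left.1 (hdisj _ _ hne) (hkf0 s) h
    · rintro rfl; exact hkf0 s
  have hn' : (0 : ℝ) < n := Nat.cast_pos.2 hn
  have hnε : 0 < (n : ℝ) * ε := mul_pos hn' hε
  set g : Fin n → Fin n → ℝ := fun s t => if kf s = kf t then f s t else ε with hg
  have hblock := fun k b c => aux_block (lapOn f (V k)) (Fintype.card_coe (V k))
    (Finset.card_pos.2 (hne k)) (aux_lapOn_row f (V k)) (lam k) (hzero k) (hroots k) b c
  have hcard : ∀ k, (0 : ℝ) < (V k).card := fun k => Nat.cast_pos.2 (Finset.card_pos.2 (hne k))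
  have hden : ∀ k, (lapOn f (V k) + (((V k).card : ℝ))⁻¹ • Jmat _).det =
      ∏ j ∈ Finset.univ.filter (fun j : Fin (V k).card => (j : ℕ) ≠ 0), lam k j := by
    intro k
    have := hblock k 0 ((V k).card : ℝ)⁻¹
    simpa [inv_mul_cancel₀ (hcard k).ne'] using this
  have hlampos : ∀ k, 0 < ∏ j ∈ Finset.univ.filter (fun j : Fin (V k).card => (j : ℕ) ≠ 0),
      lam k j := fun k => Finset.prod_pos fun j hj => hpos k j (Finset.mem_filter.1 hj).2
  -- monotonicity
  have hmon : (lap f + ((n : ℝ))⁻¹ • Jmat (Fin n)).det ≤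
      (lap g + ((n : ℝ))⁻¹ • Jmat (Fin n)).det := by
    have hA : (lap f + ((n : ℝ))⁻¹ • Jmat (Fin n)).PosSemidef :=
      (aux_lap_psd f hsym hnn).add (aux_J_psd.smul (inv_nonneg.2 hn'.le))
    have hP : (lap (fun s t => g s t - f s t)).PosSemidef := by
      apply aux_lap_psd
      · intro s t
        simp only [hg, hsym s t, eq_comm (a := kf s)]
      · intro s t
        simp only [hg]
        split_ifs with h
        · simp
        · exact sub_nonneg.2 (hcross s t _ _ h (hkf0 s) (hkf0 t))
    have := aux_det_mono _ _ hA hP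
    have e : lap f + ((n : ℝ))⁻¹ • Jmat (Fin n) + lap (fun s t => g s t - f s t) =
        lap g + ((n : ℝ))⁻¹ • Jmat (Fin n) := by
      have : lap f + lap (fun s t => g s t - f s t) = lap g := by
        ext s t
        by_cases h : s = t
        · subst h; simp [lap]
        · simp [lap, h]; ring
      rw [← this]; abel
    rwa [e] at this
  have hdetg : (lap g + ((n : ℝ))⁻¹ • Jmat (Fin n)).det = ((n : ℝ) * ε) ^ (K - 1) *
      ∏ k, ∏ j ∈ Finset.univ.filter (fun j : Fin (V k).card => (j : ℕ) ≠ 0),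
        (lam k j + ((n : ℝ) - ((V k).card : ℝ)) * ε) := by
    have h1 := aux_det_J (lap g + ε • Jmat (Fin n)) (n * ε) ((n : ℝ)⁻¹ - ε) (by
      intro i
      simp [Finset.sum_add_distrib, aux_lap_row, Jmat])
    have e : lap g + ε • Jmat (Fin n) + ((n : ℝ)⁻¹ - ε) • Jmat (Fin n) =
        lap g + ((n : ℝ))⁻¹ • Jmat (Fin n) := by
      rw [sub_smul]; abel
    have e2 : (n : ℝ) * ε + ((n : ℝ)⁻¹ - ε) * (Fintype.card (Fin n) : ℝ) = 1 := by
      rw [Fintype.card_fin]; field_simp; ring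
    rw [e, e2, mul_one, hg, aux_full ε f V kf hkf] at h1
    have e3 : ∀ k, ((n : ℝ) - (V k).card) * ε + ε * (V k).card = n * ε := fun k => by ring
    simp only [hblock, e3, Finset.prod_mul_distrib, Finset.prod_const, Finset.card_univ,
      Fintype.card_fin] at h1
    apply mul_right_cancel₀ hnε.ne'
    rw [h1]
    obtain ⟨m, rfl⟩ : ∃ m, K = m + 1 := ⟨K - 1, by omega⟩
    simp only [Nat.add_sub_cancel, pow_succ]
    ring
  have hfin : ∀ k, (∏ j ∈ Finset.univ.filter (fun j : Fin (V k).card => (j : ℕ) ≠ 0),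
        (lam k j + ((n : ℝ) - ((V k).card : ℝ)) * ε)) =
      (∏ j ∈ Finset.univ.filter (fun j : Fin (V k).card => (j : ℕ) ≠ 0),
        (1 + ((n : ℝ) - ((V k).card : ℝ)) * ε / lam k j)) *
      ∏ j ∈ Finset.univ.filter (fun j : Fin (V k).card => (j : ℕ) ≠ 0), lam k j := by
    intro k
    rw [← Finset.prod_mul_distrib]
    refine Finset.prod_congr rfl fun j hj => ?_
    have := (hpos k j (Finset.mem_filter.1 hj).2).ne'
    field_simp
  rw [div_le_iff₀ (Finset.prod_pos fun k _ => by rw [hden]; exact hlampos k)]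
  refine hmon.trans (le_of_eq ?_)
  rw [hdetg, mul_assoc, ← Finset.prod_mul_distrib]
  congr 1
  refine Finset.prod_congr rfl fun k _ => ?_
  rw [hfin, hden]
end
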